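/- Under the exploration assumption and the ρ-approximation bound, for every V ∈ ℝ^S and λ ∈ [0,1): ‖T̄^{(λ)}(V) − T̃^{(λ)}(V)‖_d ≤ αρ‖V‖_d/(1−βλ), where T̄^{(λ)} is the exact multi-step operator built from U and T̃^{(λ)} the approximate one built from Û. -/

import Mathlib

/-!
The rewards and the bootstrap terms `(αP)^{m+1} V` cancel in the difference of the two operators,
leaving `(1-λ) Σ_m λ^m α Σ_{t≤m} (αP)^t e` with `e = σ_U(V) - σ_Û(V)`. Since `|e| ≤ ρ‖V‖_d`
holds at every state, the estimate can be made in the sup norm: `αP` contracts it by `α`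
(`norm_pow_mulVec_le`), so the difference is at most
`(1-λ) Σ_m λ^m α Σ_{t≤m} α^t ρ‖V‖_d = αρ‖V‖_d / (1-αλ)` (`hasSum_geom_geom`). As `d` is a
probability vector, `‖·‖_d` is at most the sup norm (`dnorm_le_norm`), and summing
`αP ≤ βP_e` over a row gives `α ≤ β`, which turns the bound into the claimed one.
-/


open Matrix Finset

/-- d-weighted Euclidean norm on ℝ^S. -/
noncomputable def dnorm {S : Type*} [Fintype S] (d V : S → ℝ) : ℝ :=
  Real.sqrt (∑ s, d s * (V s) ^ 2)

/-- σ_U(V)(s) = inf_{u ∈ U_s} Σ_{s'} u(s') V(s'). -/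
noncomputable def sigmaSet {S : Type*} [Fintype S] (U : S → Set (S → ℝ)) (V : S → ℝ) :
    S → ℝ :=
  fun s => sInf ((fun u => ∑ s', u s' * V s') '' U s)

/-- The multi-step operator built from the uncertainty sets `U`:
(1−λ) Σ_m λ^m [Σ_{t≤m} (αP)^t r + α Σ_{t≤m} (αP)^t σ_U(V) + (αP)^{m+1} V]. -/
noncomputable def multiStepOp {S : Type*} [Fintype S] [DecidableEq S] (r : S → ℝ)
    (P : Matrix S S ℝ) (α lam : ℝ) (U : S → Set (S → ℝ)) (V : S → ℝ) : S → ℝ :=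
  (1 - lam) • ∑' m : ℕ, lam ^ m •
    ((∑ t ∈ Finset.range (m + 1), ((α • P) ^ t).mulVec r)
      + α • (∑ t ∈ Finset.range (m + 1), ((α • P) ^ t).mulVec (sigmaSet U V))
      + ((α • P) ^ (m + 1)).mulVec V)

theorem dnorm_le_norm {S : Type*} [Fintype S] (d : S → ℝ) (hd : ∀ s, 0 < d s)
    (h1 : ∑ s, d s = 1) (V : S → ℝ) : dnorm d V ≤ ‖V‖ := by
  unfold dnorm
  apply Real.sqrt_le_iff.2 ⟨norm_nonneg _, ?_⟩
  calc ∑ s, d s * (V s) ^ 2 ≤ ∑ s, d s * ‖V‖ ^ 2 := by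
        refine Finset.sum_le_sum fun s _ => mul_le_mul_of_nonneg_left ?_ (hd s).le
        rw [← sq_abs, ← Real.norm_eq_abs]
        exact pow_le_pow_left₀ (norm_nonneg _) (norm_le_pi_norm V s) 2
    _ = ‖V‖ ^ 2 := by rw [← Finset.sum_mul, h1, one_mul]

theorem norm_smul_mulVec_le {S : Type*} [Fintype S] (P : Matrix S S ℝ)
    (hP0 : ∀ s s', 0 ≤ P s s') (hP1 : ∀ s, ∑ s', P s s' = 1) (α : ℝ) (hα : 0 ≤ α)
    (f : S → ℝ) : ‖(α • P).mulVec f‖ ≤ α * ‖f‖ := by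
  refine (pi_norm_le_iff_of_nonneg (by positivity)).2 fun s => ?_
  rw [Matrix.smul_mulVec, Pi.smul_apply, norm_smul, Real.norm_of_nonneg hα]
  refine mul_le_mul_of_nonneg_left ?_ hα
  calc ‖∑ s', P s s' * f s'‖ ≤ ∑ s', P s s' * ‖f‖ := by
        refine norm_sum_le_of_le _ fun s' _ => ?_
        rw [norm_mul, Real.norm_of_nonneg (hP0 s s')]
        exact mul_le_mul_of_nonneg_left (norm_le_pi_norm f s') (hP0 s s')
    _ = ‖f‖ := by rw [← Finset.sum_mul, hP1, one_mul]

theorem norm_pow_mulVec_le {S : Type*} [Fintype S] [DecidableEq S] (P : Matrix S S ℝ)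
    (hP0 : ∀ s s', 0 ≤ P s s') (hP1 : ∀ s, ∑ s', P s s' = 1) (α : ℝ) (hα : 0 ≤ α)
    (f : S → ℝ) (t : ℕ) : ‖((α • P) ^ t).mulVec f‖ ≤ α ^ t * ‖f‖ := by
  induction t with
  | zero => simp
  | succ t ih =>
    rw [pow_succ', ← Matrix.mulVec_mulVec, pow_succ', mul_assoc]
    exact (norm_smul_mulVec_le P hP0 hP1 α hα _).trans (mul_le_mul_of_nonneg_left ih hα)

theorem norm_sum_pow_mulVec_le {S : Type*} [Fintype S] [DecidableEq S] (P : Matrix S S ℝ)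
    (hP0 : ∀ s s', 0 ≤ P s s') (hP1 : ∀ s, ∑ s', P s s' = 1) (α : ℝ) (hα : 0 ≤ α)
    (f : S → ℝ) (n : ℕ) :
    ‖∑ t ∈ Finset.range n, ((α • P) ^ t).mulVec f‖ ≤ (∑ t ∈ Finset.range n, α ^ t) * ‖f‖ := by
  rw [Finset.sum_mul]
  exact norm_sum_le_of_le _ fun t _ => norm_pow_mulVec_le P hP0 hP1 α hα f t

theorem hasSum_geom_geom (α lam : ℝ) (hα : α ∈ Set.Ioo (0 : ℝ) 1)
    (hlam : lam ∈ Set.Ico (0 : ℝ) 1) :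
    HasSum (fun m : ℕ => lam ^ m * ∑ t ∈ Finset.range (m + 1), α ^ t)
      (1 / ((1 - lam) * (1 - α * lam))) := by
  obtain ⟨a0, a1⟩ := hα
  obtain ⟨l0, l1⟩ := hlam
  have hal : α * lam < 1 := by nlinarith
  have h1 := hasSum_geometric_of_lt_one l0 l1
  have h2 := hasSum_geometric_of_lt_one (mul_nonneg a0.le l0) hal
  have n1 : 1 - α ≠ 0 := by linarith
  have n2 : 1 - lam ≠ 0 := by linarith
  have n3 : 1 - α * lam ≠ 0 := by linarith
  have hf : ∀ m : ℕ, lam ^ m * ∑ t ∈ Finset.range (m + 1), α ^ t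
      = (1 - α)⁻¹ * (lam ^ m - α * (α * lam) ^ m) := fun m => by
    rw [eq_inv_mul_iff_mul_eq₀ n1, mul_left_comm, mul_neg_geom_sum, mul_pow, pow_succ]
    ring
  have hval : 1 / ((1 - lam) * (1 - α * lam))
      = (1 - α)⁻¹ * ((1 - lam)⁻¹ - α * (1 - α * lam)⁻¹) := by
    rw [eq_inv_mul_iff_mul_eq₀ n1]
    field_simp
    ring
  rw [hval, funext hf]
  exact (h1.sub (h2.mul_left α)).mul_left _

/-- The series defining the multi-step operator converges, so its `tsum` is a genuine limit.
The vector `w` stands for `σ_U(V)`. -/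
theorem summable_multiStep {S : Type*} [Fintype S] [DecidableEq S] (P : Matrix S S ℝ)
    (hP0 : ∀ s s', 0 ≤ P s s') (hP1 : ∀ s, ∑ s', P s s' = 1) (α lam : ℝ)
    (hα : α ∈ Set.Ioo (0 : ℝ) 1) (hlam : lam ∈ Set.Ico (0 : ℝ) 1) (r w V : S → ℝ) :
    Summable fun m : ℕ => lam ^ m •
      ((∑ t ∈ Finset.range (m + 1), ((α • P) ^ t).mulVec r)
        + α • (∑ t ∈ Finset.range (m + 1), ((α • P) ^ t).mulVec w)
        + ((α • P) ^ (m + 1)).mulVec V) := by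
  have hg := (hasSum_geom_geom α lam hα hlam).summable
  have hs : ∀ f : S → ℝ, Summable fun m : ℕ => lam ^ m •
      ∑ t ∈ Finset.range (m + 1), ((α • P) ^ t).mulVec f := fun f => by
    refine Summable.of_norm_bounded (hg.mul_right ‖f‖) fun m => ?_
    rw [norm_smul, Real.norm_of_nonneg (pow_nonneg hlam.1 m), mul_assoc]
    exact mul_le_mul_of_nonneg_left (norm_sum_pow_mulVec_le P hP0 hP1 α hα.1.le f _)
      (pow_nonneg hlam.1 m)
  have hv : Summable fun m : ℕ => lam ^ m • ((α • P) ^ (m + 1)).mulVec V := by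
    refine Summable.of_norm_bounded
      ((summable_geometric_of_lt_one hlam.1 hlam.2).mul_right ‖V‖) fun m => ?_
    rw [norm_smul, Real.norm_of_nonneg (pow_nonneg hlam.1 m)]
    refine mul_le_mul_of_nonneg_left ?_ (pow_nonneg hlam.1 m)
    refine (norm_pow_mulVec_le P hP0 hP1 α hα.1.le V _).trans ?_
    exact mul_le_of_le_one_left (norm_nonneg _) (pow_le_one₀ hα.1.le hα.2.le)
  convert ((hs r).add ((hs w).const_smul α)).add hv using 2 with m
  rw [smul_add, smul_add, smul_comm α]

theorem exact_approx_multiStepOp_diff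
    {S : Type*} [Fintype S] [DecidableEq S] [Nonempty S]
    (d : S → ℝ) (hd : ∀ s, 0 < d s)
    (r : S → ℝ) (P : Matrix S S ℝ)
    (hP0 : ∀ s s', 0 ≤ P s s') (hP1 : ∀ s, ∑ s', P s s' = 1)
    (α : ℝ) (hα : α ∈ Set.Ioo (0 : ℝ) 1)
    (U : S → Set (S → ℝ)) (hU : ∀ s, (U s).Nonempty) (hUc : ∀ s, IsCompact (U s))
    (Pe : Matrix S S ℝ) (hPe0 : ∀ s s', 0 ≤ Pe s s') (hPe1 : ∀ s, ∑ s', Pe s s' = 1)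
    (β : ℝ) (hβ : β ∈ Set.Ioo (0 : ℝ) 1)
    (hexp1 : ∀ s s', ∀ u ∈ U s, 0 ≤ P s s' + u s')
    (hexp2 : ∀ s s', ∀ u ∈ U s, α * (P s s' + u s') ≤ β * Pe s s')
    (hexp3 : ∀ s s', α * P s s' ≤ β * Pe s s')
    (hstat1 : ∑ s, d s = 1) (hstat2 : ∀ s', ∑ s, d s * Pe s s' = d s')
    (Uh : S → Set (S → ℝ)) (hUh : ∀ s, (Uh s).Nonempty) (hUhc : ∀ s, IsCompact (Uh s))
    (ρ : ℝ) (hρ0 : 0 ≤ ρ)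
    (hρ : ∀ (V : S → ℝ) (s : S), |sigmaSet Uh V s - sigmaSet U V s| ≤ ρ * dnorm d V)
    (lam : ℝ) (hlam : lam ∈ Set.Ico (0 : ℝ) 1)
    (V : S → ℝ) :
    dnorm d (multiStepOp r P α lam U V - multiStepOp r P α lam Uh V)
      ≤ α * ρ * dnorm d V / (1 - β * lam) := by
  have hc : 0 ≤ ρ * dnorm d V := mul_nonneg hρ0 (Real.sqrt_nonneg _)
  have a0 : 0 < α := hα.1
  have l1 : 0 < 1 - lam := by linarith [hlam.2]
  -- Row sums of `αP ≤ βP_e`.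
  have hαβ : α ≤ β := by
    obtain ⟨s⟩ := ‹Nonempty S›
    have h := Finset.sum_le_sum fun s' (_ : s' ∈ Finset.univ) => hexp3 s s'
    rwa [← Finset.mul_sum, ← Finset.mul_sum, hP1, hPe1, mul_one, mul_one] at h
  have hβl : 0 < 1 - β * lam := by nlinarith [hβ.1, hβ.2, hlam.1, hlam.2]
  have hαl : 1 - β * lam ≤ 1 - α * lam := by nlinarith [hlam.1]
  have he : ‖sigmaSet U V - sigmaSet Uh V‖ ≤ ρ * dnorm d V := by
    refine (pi_norm_le_iff_of_nonneg hc).2 fun s => ?_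
    rw [Pi.sub_apply, Real.norm_eq_abs, abs_sub_comm]
    exact hρ V s
  refine (dnorm_le_norm d hd hstat1 _).trans ?_
  unfold multiStepOp
  rw [← smul_sub, ← (summable_multiStep P hP0 hP1 α lam hα hlam r _ V).tsum_sub
    (summable_multiStep P hP0 hP1 α lam hα hlam r _ V), norm_smul, Real.norm_of_nonneg l1.le]
  have hb := tsum_of_norm_bounded (f := fun m : ℕ => lam ^ m •
      ((∑ t ∈ Finset.range (m + 1), ((α • P) ^ t).mulVec r)
        + α • (∑ t ∈ Finset.range (m + 1), ((α • P) ^ t).mulVec (sigmaSet U V))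
        + ((α • P) ^ (m + 1)).mulVec V) - lam ^ m •
      ((∑ t ∈ Finset.range (m + 1), ((α • P) ^ t).mulVec r)
        + α • (∑ t ∈ Finset.range (m + 1), ((α • P) ^ t).mulVec (sigmaSet Uh V))
        + ((α • P) ^ (m + 1)).mulVec V))
    ((hasSum_geom_geom α lam hα hlam).mul_right (α * (ρ * dnorm d V))) fun m => by
      have hl := pow_nonneg hlam.1 m
      rw [← smul_sub, add_sub_add_right_eq_sub, add_sub_add_left_eq_sub, ← smul_sub,
        ← Finset.sum_sub_distrib]
      simp_rw [← Matrix.mulVec_sub]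
      rw [norm_smul, norm_smul, Real.norm_of_nonneg hl, Real.norm_of_nonneg a0.le, mul_assoc]
      refine mul_le_mul_of_nonneg_left ?_ hl
      rw [mul_left_comm]
      refine mul_le_mul_of_nonneg_left ?_ a0.le
      refine (norm_sum_pow_mulVec_le P hP0 hP1 α a0.le _ _).trans ?_
      exact mul_le_mul_of_nonneg_left he (Finset.sum_nonneg fun t _ => pow_nonneg a0.le t)
  refine (mul_le_mul_of_nonneg_left hb l1.le).trans ?_
  have h3 : 0 < 1 - α * lam := hβl.trans_le hαl
  have heq : (1 - lam) * (1 / ((1 - lam) * (1 - α * lam)) * (α * (ρ * dnorm d V)))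
      = α * ρ * dnorm d V / (1 - α * lam) := by
    field_simp
  rw [heq]
  refine div_le_div_of_nonneg_left ?_ hβl hαl
  rw [mul_assoc]
  exact mul_nonneg a0.le hc
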